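/- Let ε > 0, α > 0, and suppose F₀ is a radially symmetric C² function on the closed exterior domain {|x| ≥ ε} in ℝ², decaying at infinity together with its derivatives, satisfying (1 − αΔ)F₀ = 0 on {|x| > ε} and ∂F₀/∂n̂ = A on {|x| = ε} (with n̂ = x/ε the interior normal), and let B be the (constant) value of F₀ on {|x| = ε}. Let G_α be the kernel of (1 − αΔ)^{-1} on ℝ². Then B = −α A · (∫_{{|x|=ε}} G_α ds) / (∫_{{|x| > ε}} G_α dx). -/

import Mathlib

open MeasureTheory Real Set Filter

noncomputable section

/-- Euclidean norm on `ℝ × ℝ`. -/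
def norm2 (x : ℝ × ℝ) : ℝ := Real.sqrt (x.1 ^ 2 + x.2 ^ 2)

/-- Partial derivative in the first coordinate direction. -/
def pd1 (f : ℝ × ℝ → ℝ) (x : ℝ × ℝ) : ℝ := fderiv ℝ f x (1, 0)

/-- Partial derivative in the second coordinate direction. -/
def pd2 (f : ℝ × ℝ → ℝ) (x : ℝ × ℝ) : ℝ := fderiv ℝ f x (0, 1)

/-- Laplacian. -/
def lap (f : ℝ × ℝ → ℝ) (x : ℝ × ℝ) : ℝ := pd1 (pd1 f) x + pd2 (pd2 f) x

/-!
In the variable `s = |x|²` the plane has area element `π ds`, and the Laplacian of `x ↦ k (|x|²)` is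
`4 (s k')'`. Testing the fundamental solution against radial functions therefore shows that its
profile `G` has mass `1 / π` and satisfies `4 α t G'(t) = -∫_t^∞ G`. The profile `K` of the exterior
solution satisfies `K = 4 α (s K')'`, so `4 α t K'(t) G(t) + K(t) ∫_t^∞ G` has zero derivative. It
tends to `0` along a sequence `t → ∞`, hence it vanishes at the boundary `t = ε²`; this is the
formula.
-/

open scoped ContDiff Topology

section WeakDerivative

variable {E : Type*} [NormedAddCommGroup E] [NormedSpace ℝ E]

theorem contDiff_integral_right [CompleteSpace E] {f : ℝ → E} (hf : ContDiff ℝ ∞ f) (a : ℝ) :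
    ContDiff ℝ ∞ fun t => ∫ s in a..t, f s := by
  rw [contDiff_infty_iff_deriv, funext fun t => hf.continuous.deriv_integral f a t]
  exact ⟨fun t => (hf.continuous.integral_hasStrictDerivAt a t).hasDerivAt.differentiableAt,
    hf⟩

theorem exists_contDiff_deriv_eq_of_integral_eq_zero [CompleteSpace E] {U : Set ℝ}
    (hU : U.OrdConnected) {f : ℝ → E} (hf : ContDiff ℝ ∞ f) (hfc : HasCompactSupport f)
    (hfU : tsupport f ⊆ U) (hf0 : ∫ s, f s = 0) :
    ∃ w : ℝ → E, ContDiff ℝ ∞ w ∧ HasCompactSupport w ∧ tsupport w ⊆ U ∧ deriv w = f := by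
  rcases (tsupport f).eq_empty_or_nonempty with hempty | hne
  · obtain rfl := tsupport_eq_empty_iff.1 hempty
    exact ⟨0, hf, hfc, hfU, deriv_zero⟩
  obtain ⟨a, ha⟩ := hfc.isCompact.exists_isLeast hne
  obtain ⟨b, hb⟩ := hfc.isCompact.exists_isGreatest hne
  have hsupp : Function.support f ⊆ Ioo a b := by
    rw [← interior_Icc]
    exact interior_maximal (fun s hs => ⟨ha.2 (subset_tsupport f hs), hb.2 (subset_tsupport f hs)⟩)
      hf.continuous.isOpen_support
  let w : ℝ → E := fun t => ∫ s in a..t, f s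
  have hw : ∀ t ∉ Icc a b, w t = 0 := by
    intro t ht
    rcases lt_or_ge t a with hta | hat
    · refine intervalIntegral.integral_zero_ae (Eventually.of_forall fun s hs => ?_)
      rw [uIoc_of_ge hta.le] at hs
      exact Function.notMem_support.1 fun h => (hsupp h).1.not_ge hs.2
    · have hbt : b < t := not_le.1 fun h => ht ⟨hat, h⟩
      exact (intervalIntegral.integral_eq_integral_of_support_subset
        (hsupp.trans (Ioo_subset_Ioc_self.trans (Ioc_subset_Ioc_right hbt.le)))).trans hf0
  refine ⟨w, contDiff_integral_right hf a, HasCompactSupport.intro isCompact_Icc hw, ?_,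
    funext fun t => hf.continuous.deriv_integral f a t⟩
  refine (closure_minimal (fun t ht => ?_) isClosed_Icc).trans (hU.out (hfU ha.1) (hfU hb.1))
  exact by_contra fun h => Function.mem_support.1 ht (hw t h)

theorem integrable_smul_of_tsupport_subset {U : Set ℝ} {f : ℝ → E}
    (hf : LocallyIntegrableOn f U) {w : ℝ → ℝ} (hw : Continuous w) (hwc : HasCompactSupport w)
    (hwU : tsupport w ⊆ U) : Integrable fun s => w s • f s := by
  have hsupp : (Function.support fun s => w s • f s) ⊆ tsupport w :=
    (Function.support_smul_subset_left w f).trans (subset_tsupport w)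
  rw [← integrableOn_iff_integrable_of_support_subset hsupp]
  exact (hf.integrableOn_compact_subset hwU hwc).continuousOn_smul hw.continuousOn hwc

/-- The du Bois-Reymond lemma. -/
theorem exists_ae_eq_const_of_integral_deriv_smul_eq_zero [CompleteSpace E] {U : Set ℝ}
    (hUo : IsOpen U) (hUc : U.OrdConnected) {f : ℝ → E} (hf : LocallyIntegrableOn f U)
    (h : ∀ w : ℝ → ℝ, ContDiff ℝ ∞ w → HasCompactSupport w → tsupport w ⊆ U →
      ∫ s, deriv w s • f s = 0) :
    ∃ c, ∀ᵐ s, s ∈ U → f s = c := by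
  rcases U.eq_empty_or_nonempty with rfl | ⟨s₀, hs₀⟩
  · simp
  obtain ⟨r, hr, hrU⟩ := Metric.nhds_basis_closedBall.mem_iff.1 (hUo.mem_nhds hs₀)
  let b : ContDiffBump s₀ := ⟨r / 2, r, half_pos hr, half_lt_self hr⟩
  let ρ : ℝ → ℝ := b.normed volume
  have hρ : ContDiff ℝ ∞ ρ := b.contDiff_normed
  have hρc : HasCompactSupport ρ := b.hasCompactSupport_normed
  have hρU : tsupport ρ ⊆ U := b.tsupport_normed_eq.trans_subset hrU
  have hρi : Integrable ρ := hρ.continuous.integrable_of_hasCompactSupport hρc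
  have hρf := integrable_smul_of_tsupport_subset hf hρ.continuous hρc hρU
  refine ⟨∫ s, ρ s • f s, ?_⟩
  set c := ∫ s, ρ s • f s
  suffices hae : ∀ᵐ s, s ∈ U → f s - c = 0 from
    hae.mono fun s hs hsU => sub_eq_zero.1 (hs hsU)
  refine hUo.ae_eq_zero_of_integral_contDiff_smul_eq_zero
    (hf.sub ((locallyIntegrable_const c).locallyIntegrableOn U)) fun η hη hηc hηU => ?_
  have hηi : Integrable η := hη.continuous.integrable_of_hasCompactSupport hηc
  have hηf := integrable_smul_of_tsupport_subset hf hη.continuous hηc hηU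
  -- Subtracting a multiple of `ρ` makes the test function `η` a derivative.
  set m := ∫ s, η s
  have hint : ∫ s, (η s - m * ρ s) = 0 := by
    rw [integral_sub hηi (hρi.const_mul m), integral_const_mul, b.integral_normed, mul_one,
      sub_self]
  have hsupp : tsupport (fun s => η s - m * ρ s) ⊆ tsupport η ∪ tsupport ρ :=
    (tsupport_sub η fun s => m * ρ s).trans (union_subset_union_right _ tsupport_mul_subset_right)
  obtain ⟨w, hw, hwc, hwU, hdw⟩ := exists_contDiff_deriv_eq_of_integral_eq_zero hUc
    (hη.sub (contDiff_const.mul hρ)) (hηc.sub hρc.mul_left)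
    (hsupp.trans (union_subset hηU hρU)) hint
  have hmρf : Integrable fun s => m • ρ s • f s := hρf.smul m
  have hzero := h w hw hwc hwU
  simp only [hdw, sub_smul, mul_smul] at hzero
  rw [integral_sub hηf hmρf, integral_smul] at hzero
  simp only [smul_sub]
  rw [integral_sub hηf (hηi.smul_const c), integral_smul_const, hzero]

theorem integral_deriv_smul_eq_neg_of_hasDerivAt {U : Set ℝ} (hU : IsOpen U) {f g : ℝ → E}
    (hf : ∀ s ∈ U, HasDerivAt f (g s) s) (hg : ContinuousOn g U) {w : ℝ → ℝ}
    (hw : ContDiff ℝ 1 w) (hwc : HasCompactSupport w) (hwU : tsupport w ⊆ U) :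
    ∫ s, deriv w s • f s = -∫ s, w s • g s := by
  have hfl : LocallyIntegrableOn f U :=
    ContinuousOn.locallyIntegrableOn (fun s hs => (hf s hs).continuousAt.continuousWithinAt)
      hU.measurableSet
  have hwf := integrable_smul_of_tsupport_subset hfl hw.continuous hwc hwU
  have hdwf := integrable_smul_of_tsupport_subset hfl (hw.continuous_deriv le_rfl) hwc.deriv
    (tsupport_deriv_subset.trans hwU)
  have hwg := integrable_smul_of_tsupport_subset (hg.locallyIntegrableOn hU.measurableSet)
    hw.continuous hwc hwU
  have hderiv : ∀ s, HasDerivAt (fun s => w s • f s) (w s • g s + deriv w s • f s) s := by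
    intro s
    by_cases hs : s ∈ tsupport w
    · exact (hw.differentiable one_ne_zero s).hasDerivAt.smul (hf s (hwU hs))
    · rw [image_eq_zero_of_notMem_tsupport hs, deriv_of_notMem_tsupport hs, zero_smul, zero_smul,
        add_zero]
      refine (hasDerivAt_const s (0 : E)).congr_of_eventuallyEq ?_
      filter_upwards [notMem_tsupport_iff_eventuallyEq.1 hs] with x hx
      simp only [hx, Pi.zero_apply, zero_smul]
  have hzero := integral_eq_zero_of_hasDerivAt_of_integrable hderiv (hwg.add hdwf) hwf
  rw [integral_add hwg hdwf] at hzero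
  exact eq_neg_of_add_eq_zero_right hzero

theorem hasDerivAt_of_integral_deriv_smul_eq_neg [CompleteSpace E] {U : Set ℝ} (hUo : IsOpen U)
    (hUc : U.OrdConnected) {f g : ℝ → E} (hf : ContinuousOn f U) (hg : ContinuousOn g U)
    (h : ∀ w : ℝ → ℝ, ContDiff ℝ ∞ w → HasCompactSupport w → tsupport w ⊆ U →
      ∫ s, deriv w s • f s = -∫ s, w s • g s) {t : ℝ} (ht : t ∈ U) :
    HasDerivAt f (g t) t := by
  let P : ℝ → E := fun s => ∫ x in t..s, g x
  have hP : ∀ s ∈ U, HasDerivAt P (g s) s := fun s hs =>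
    intervalIntegral.integral_hasDerivAt_right
      (hg.mono (hUc.uIcc_subset ht hs)).intervalIntegrable
      (hg.stronglyMeasurableAtFilter hUo s hs) (hg.continuousAt (hUo.mem_nhds hs))
  have hPc : ContinuousOn P U := fun s hs => (hP s hs).continuousAt.continuousWithinAt
  have hfl := hf.locallyIntegrableOn (μ := volume) hUo.measurableSet
  have hPl := hPc.locallyIntegrableOn (μ := volume) hUo.measurableSet
  obtain ⟨c, hc⟩ := exists_ae_eq_const_of_integral_deriv_smul_eq_zero hUo hUc (hfl.sub hPl) <| by
    intro w hw hwc hwU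
    have hdw : Continuous (deriv w) := hw.continuous_deriv (by simp)
    have hdwU : tsupport (deriv w) ⊆ U := tsupport_deriv_subset.trans hwU
    simp only [Pi.sub_apply, smul_sub]
    rw [integral_sub (integrable_smul_of_tsupport_subset hfl hdw hwc.deriv hdwU)
      (integrable_smul_of_tsupport_subset hPl hdw hwc.deriv hdwU), h w hw hwc hwU,
      integral_deriv_smul_eq_neg_of_hasDerivAt hUo hP hg (hw.of_le (by simp)) hwc hwU, sub_self]
  have hfP : EqOn f (fun s => c + P s) U :=
    Measure.eqOn_open_of_ae_eq (μ := volume)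
      ((ae_restrict_iff' hUo.measurableSet).2 <|
        hc.mono fun s hs hsU => sub_eq_iff_eq_add.1 (hs hsU))
      hUo hf (continuousOn_const.add hPc)
  exact ((hP t ht).const_add c).congr_of_eventuallyEq (hfP.eventuallyEq_of_mem (hUo.mem_nhds ht))

end WeakDerivative

section HalfLine

variable {E : Type*} [NormedAddCommGroup E] [NormedSpace ℝ E]

theorem hasDerivAt_integral_Ioi [CompleteSpace E] {f : ℝ → E} {a t : ℝ}
    (hf : IntegrableOn f (Ioi a)) (hat : a < t) (hft : ContinuousAt f t) :
    HasDerivAt (fun t => ∫ x in Ioi t, f x) (-f t) t := by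
  have hint : IntervalIntegrable f volume a t :=
    (intervalIntegrable_iff_integrableOn_Ioc_of_le hat.le).2 (hf.mono_set Ioc_subset_Ioi_self)
  refine ((intervalIntegral.integral_hasDerivAt_right hint
    ⟨Ioi a, Ioi_mem_nhds hat, hf.aestronglyMeasurable⟩ hft).const_sub
      (∫ x in Ioi a, f x)).congr_of_eventuallyEq ?_
  filter_upwards [Ioi_mem_nhds hat] with s hs
  rw [← intervalIntegral.integral_Ioi_sub_Ioi hf (mem_Ioi.1 hs).le, sub_sub_cancel]

theorem integrableOn_Ioi_smul_of_eventually_eq_zero {f : ℝ → E} {a : ℝ}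
    (hf : LocallyIntegrableOn f (Ici a)) {h : ℝ → ℝ} (hh : ContinuousOn h (Ici a))
    (h0 : ∀ᶠ s in atTop, h s = 0) : IntegrableOn (fun s => h s • f s) (Ioi a) := by
  obtain ⟨N, hN⟩ := eventually_atTop.1 h0
  have hIcc : IntegrableOn (fun s => h s • f s) (Icc a N) :=
    (hf.integrableOn_compact_subset Icc_subset_Ici_self isCompact_Icc).continuousOn_smul
      (hh.mono Icc_subset_Ici_self) isCompact_Icc
  refine hIcc.of_forall_sdiff_eq_zero measurableSet_Ioi fun s hs => ?_
  have hNs : N ≤ s := le_of_not_ge fun h => hs.2 ⟨(mem_Ioi.1 hs.1).le, h⟩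
  rw [hN s hNs, zero_smul]

theorem integral_Ioi_smul_eq_add_integral_deriv_smul [CompleteSpace E] {f : ℝ → E} {a : ℝ}
    (hf : IntegrableOn f (Ioi a)) (hfc : ContinuousOn f (Ioi a)) {h : ℝ → ℝ}
    (hh : ContDiff ℝ 1 h) (h0 : ∀ᶠ s in atTop, h s = 0) :
    ∫ s in Ioi a, h s • f s =
      h a • (∫ s in Ioi a, f s) + ∫ s in Ioi a, deriv h s • ∫ x in Ioi s, f x := by
  let R : ℝ → E := fun s => ∫ x in Ioi s, f x
  have hfl : LocallyIntegrableOn f (Ici a) :=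
    IntegrableOn.locallyIntegrableOn (by rwa [integrableOn_Ici_iff_integrableOn_Ioi])
  have hR : ContinuousOn R (Ici a) := hf.continuousOn_Ici_primitive_Ioi
  have hdh0 : ∀ᶠ s in atTop, deriv h s = 0 := by
    obtain ⟨N, hN⟩ := eventually_atTop.1 h0
    filter_upwards [eventually_gt_atTop N] with s hs
    have hloc : h =ᶠ[𝓝 s] fun _ => 0 := by
      filter_upwards [Ioi_mem_nhds hs] with x hx using hN x (mem_Ioi.1 hx).le
    rw [hloc.deriv_eq, deriv_const]
  have hderiv : ∀ s ∈ Ioi a, HasDerivAt (fun s => h s • R s) (deriv h s • R s - h s • f s) s := by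
    intro s hs
    refine ((hh.differentiable one_ne_zero s).hasDerivAt.smul (hasDerivAt_integral_Ioi hf hs
      (hfc.continuousAt (Ioi_mem_nhds hs)))).congr_deriv ?_
    rw [smul_neg]
    abel
  have hdhR : IntegrableOn (fun s => deriv h s • R s) (Ioi a) :=
    integrableOn_Ioi_smul_of_eventually_eq_zero (hR.locallyIntegrableOn measurableSet_Ici)
      (hh.continuous_deriv le_rfl).continuousOn hdh0
  have hhf : IntegrableOn (fun s => h s • f s) (Ioi a) :=
    integrableOn_Ioi_smul_of_eventually_eq_zero hfl hh.continuous.continuousOn h0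
  have hlim : Tendsto (fun s => h s • R s) atTop (𝓝 0) :=
    tendsto_const_nhds.congr' (h0.mono fun s hs => by simp only [hs, zero_smul])
  have hftc : ∫ s in Ioi a, (deriv h s • R s - h s • f s) = 0 - h a • R a :=
    integral_Ioi_of_hasDerivAt_of_tendsto
      (hh.continuous.continuousWithinAt.smul (hR a self_mem_Ici)) hderiv (hdhR.sub hhf) hlim
  rw [integral_sub hdhR hhf, zero_sub, sub_eq_iff_eq_add, neg_add_eq_sub, eq_sub_iff_add_eq] at hftc
  rw [← hftc, add_comm]

theorem frequently_norm_smul_lt_of_integrableOn_Ioi {f : ℝ → E} {a : ℝ}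
    (hf : IntegrableOn f (Ioi a)) {C : ℝ} (hC : 0 < C) : ∃ᶠ t in atTop, ‖t • f t‖ < C := by
  intro hev
  obtain ⟨T, hT⟩ := eventually_atTop.1
    ((hev.and (eventually_gt_atTop 0)).and (eventually_ge_atTop a))
  refine not_integrableOn_Ioi_inv (a := T) <|
    (((hf.mono_set (Ioi_subset_Ioi (hT T le_rfl).2)).norm.const_mul C⁻¹).mono'
      measurable_inv.aestronglyMeasurable ?_)
  refine (ae_restrict_iff' measurableSet_Ioi).2 (Eventually.of_forall fun t ht => ?_)
  obtain ⟨⟨hCt, ht0⟩, -⟩ := hT t (mem_Ioi.1 ht).le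
  rw [not_lt, norm_smul, Real.norm_of_nonneg ht0.le] at hCt
  rw [Real.norm_of_nonneg (inv_nonneg.2 ht0.le), inv_mul_eq_div, le_div_iff₀ hC,
    inv_mul_le_iff₀ ht0]
  exact hCt

theorem exists_contDiff_deriv_eq_of_eventually_eq_zero [CompleteSpace E] {u : ℝ → E}
    (hu : ContDiff ℝ ∞ u) (hu0 : ∀ᶠ s in atTop, u s = 0) :
    ∃ h : ℝ → E, ContDiff ℝ ∞ h ∧ (∀ᶠ s in atTop, h s = 0) ∧ deriv h = u := by
  obtain ⟨N, hN⟩ := eventually_atTop.1 hu0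
  refine ⟨fun t => ∫ s in N..t, u s, contDiff_integral_right hu N, ?_,
    funext fun t => hu.continuous.deriv_integral u N t⟩
  filter_upwards [eventually_ge_atTop N] with t ht
  refine intervalIntegral.integral_zero_ae (Eventually.of_forall fun s hs => ?_)
  exact hN s (uIoc_of_le ht ▸ hs).1.le

theorem contDiff_inv_smul_of_notMem_tsupport {n : WithTop ℕ∞} {w : ℝ → E} (hw : ContDiff ℝ n w)
    (h0 : 0 ∉ tsupport w) : ContDiff ℝ n fun s => s⁻¹ • w s := by
  refine contDiff_iff_contDiffAt.2 fun s => ?_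
  by_cases hs : s ∈ tsupport w
  · exact (contDiffAt_inv ℝ fun h => h0 (h ▸ hs)).smul hw.contDiffAt
  · refine (contDiffAt_const (c := 0)).congr_of_eventuallyEq ?_
    filter_upwards [notMem_tsupport_iff_eventuallyEq.1 hs] with x hx
    rw [hx, Pi.zero_apply, smul_zero]

theorem eq_of_hasDerivAt_zero_of_tendsto [CompleteSpace E] {W : ℝ → E} {a : ℝ}
    (hc : ContinuousOn W (Ici a)) (hd : ∀ t, a < t → HasDerivAt W 0 t) {l : Filter ℝ} [NeBot l]
    (hl : l ≤ atTop) {y : E} (hlim : Tendsto W l (𝓝 y)) : W a = y := by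
  refine tendsto_nhds_unique (tendsto_const_nhds.congr' ?_) hlim
  filter_upwards [hl (eventually_ge_atTop a)] with t ht
  refine (sub_eq_zero.1 ?_).symm
  rw [← intervalIntegral.integral_eq_sub_of_hasDerivAt_of_le ht (hc.mono Icc_subset_Ici_self)
    (fun x hx => hd x hx.1) intervalIntegrable_const, intervalIntegral.integral_zero]

theorem integral_Ioi_pos {f : ℝ → ℝ} {a : ℝ} (hf : IntegrableOn f (Ioi a))
    (hpos : ∀ t, a < t → 0 < f t) : 0 < ∫ t in Ioi a, f t := by
  have hsub : Ioi a ⊆ Function.support f := fun t ht => (hpos t ht).ne'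
  rw [setIntegral_pos_iff_support_of_nonneg_ae
    ((ae_restrict_iff' measurableSet_Ioi).2 (Eventually.of_forall fun t ht => (hpos t ht).le)) hf,
    inter_eq_right.2 hsub, Real.volume_Ioi]
  exact ENNReal.zero_lt_top

end HalfLine

section RadialFundamentalSolution

/-- The Laplacian of the plane on radial functions, in the variable `s = |x|²`: the Laplacian of
`x ↦ h (|x|²)` is `x ↦ radialLap h (|x|²)`. -/
def radialLap (h : ℝ → ℝ) (s : ℝ) : ℝ := 4 * (s * deriv (deriv h) s + deriv h s)

theorem radialLap_comp_mul_left (h : ℝ → ℝ) (c s : ℝ) :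
    radialLap (fun s => h (c * s)) s = c * radialLap h (c * s) := by
  have hderiv : deriv (fun s => h (c * s)) = fun s => c * deriv h (c * s) :=
    funext fun s => deriv_comp_mul_left c h s
  simp only [radialLap, hderiv, deriv_const_mul_field, deriv_comp_mul_left c (deriv h), smul_eq_mul]
  ring

theorem continuous_radialLap {h : ℝ → ℝ} (hh : ContDiff ℝ 2 h) : Continuous (radialLap h) := by
  have hh₁ : Continuous (deriv h) := hh.continuous_deriv one_le_two
  have hh₂ : Continuous (deriv (deriv h)) := (hh.iterate_deriv' 0 2).continuous
  exact continuous_const.mul ((continuous_id.mul hh₂).add hh₁)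

theorem hasCompactSupport_radialLap {h : ℝ → ℝ} (hh : HasCompactSupport h) :
    HasCompactSupport (radialLap h) :=
  (hh.deriv.deriv.mul_left.add hh.deriv).mul_left

theorem exists_radialLap_eq_deriv {w : ℝ → ℝ} (hw : ContDiff ℝ ∞ w) (hwc : HasCompactSupport w)
    (hw0 : 0 ∉ tsupport w) :
    ∃ h : ℝ → ℝ, ContDiff ℝ ∞ h ∧ (∀ᶠ s in atTop, h s = 0) ∧ (∀ s, deriv h s = s⁻¹ • w s) ∧
      ∀ s, radialLap h s = 4 * deriv w s := by
  have hu : ContDiff ℝ ∞ fun s => s⁻¹ • w s := contDiff_inv_smul_of_notMem_tsupport hw hw0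
  have hu0 : ∀ᶠ s in atTop, s⁻¹ • w s = 0 := by
    obtain ⟨N, hN⟩ := hwc.isCompact.bddAbove
    filter_upwards [eventually_gt_atTop N] with s hs
    rw [image_eq_zero_of_notMem_tsupport fun h => (hN h).not_gt hs, smul_zero]
  obtain ⟨h, hh, hh0, hdh⟩ := exists_contDiff_deriv_eq_of_eventually_eq_zero hu hu0
  have hwh : w = fun s => s * deriv h s := by
    funext s
    rcases eq_or_ne s 0 with rfl | hs
    · rw [zero_mul, image_eq_zero_of_notMem_tsupport hw0]
    · simp only [hdh, smul_eq_mul, mul_inv_cancel_left₀ hs]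
  refine ⟨h, hh, hh0, congrFun hdh, fun s => ?_⟩
  have hdd : HasDerivAt (deriv h) (deriv (deriv h) s) s :=
    (hdh ▸ hu.differentiable (by simp) s : DifferentiableAt ℝ (deriv h) s).hasDerivAt
  rw [congrArg deriv hwh, ((hasDerivAt_id' s).fun_mul hdd).deriv, radialLap, one_mul, add_comm]

/-- `G` represents the fundamental solution `x ↦ G (|x|²)` of `1 - αΔ` on the plane, tested against
radial functions at the origin; `π ds` is the image of the area measure under `s = |x|²`. -/
def IsRadialFundamentalSolution (α : ℝ) (G : ℝ → ℝ) : Prop :=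
  ∀ h : ℝ → ℝ, ContDiff ℝ ∞ h → (∀ᶠ s in atTop, h s = 0) →
    h 0 = π * ∫ s in Ioi 0, (h s - α * radialLap h s) * G s

namespace IsRadialFundamentalSolution

variable {α : ℝ} {G : ℝ → ℝ}

theorem integral_Ioi_zero (hG : IsRadialFundamentalSolution α G) (hGi : IntegrableOn G (Ioi 0)) :
    ∫ s in Ioi 0, G s = π⁻¹ := by
  let χ : ContDiffBump (0 : ℝ) := ⟨1, 2, one_pos, one_lt_two⟩
  have hχ : Continuous χ := χ.continuous
  have hL : Continuous (radialLap χ) := continuous_radialLap χ.contDiff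
  obtain ⟨C, hC⟩ := (hasCompactSupport_radialLap χ.hasCompactSupport).exists_bound_of_continuous hL
  -- Testing against `χ (c s)` and letting `c → 0` turns the identity into `χ 0 = π ∫ G`.
  have htest : ∀ᶠ c : ℝ in 𝓝[>] 0,
      π * ∫ s in Ioi 0, (χ (c * s) - α * (c * radialLap χ (c * s))) * G s = 1 := by
    filter_upwards [self_mem_nhdsWithin] with c hc
    have hev : ∀ᶠ s : ℝ in atTop, χ (c * s) = 0 := by
      filter_upwards [(tendsto_id.const_mul_atTop hc).eventually_ge_atTop 2] with s hs
      exact χ.zero_of_le_dist ((hs.trans (le_abs_self _)).trans_eq (Real.dist_0_eq_abs _).symm)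
    have := hG (fun s => χ (c * s)) (χ.contDiff.comp (contDiff_const.mul contDiff_id)) hev
    simp only [radialLap_comp_mul_left, mul_zero] at this
    rw [← this, χ.one_of_mem_closedBall (Metric.mem_closedBall_self one_pos.le)]
  have hlim : Tendsto (fun c : ℝ =>
      ∫ s in Ioi 0, (χ (c * s) - α * (c * radialLap χ (c * s))) * G s) (𝓝[>] 0)
        (𝓝 (∫ s in Ioi 0, G s)) := by
    refine tendsto_integral_filter_of_dominated_convergence (fun s => (1 + |α| * C) * ‖G s‖)
      (Eventually.of_forall fun c => ?_) ?_ (hGi.norm.const_mul _)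
      (Eventually.of_forall fun s => ?_)
    · have : Continuous fun s => χ (c * s) - α * (c * radialLap χ (c * s)) := by fun_prop
      exact this.aestronglyMeasurable.mul hGi.aestronglyMeasurable
    · filter_upwards [Ioc_mem_nhdsGT one_pos] with c hc
      refine Eventually.of_forall fun s => ?_
      rw [norm_mul]
      gcongr
      refine (norm_sub_le _ _).trans (add_le_add ?_ ?_)
      · rw [Real.norm_of_nonneg χ.nonneg]
        exact χ.le_one
      · rw [norm_mul, norm_mul, Real.norm_eq_abs α, Real.norm_of_nonneg hc.1.le]
        gcongr
        exact (mul_le_of_le_one_left (norm_nonneg _) hc.2).trans (hC _)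
    · have : Continuous fun c => (χ (c * s) - α * (c * radialLap χ (c * s))) * G s := by fun_prop
      convert (this.tendsto 0).mono_left nhdsWithin_le_nhds using 2
      simp [χ.one_of_mem_closedBall (Metric.mem_closedBall_self one_pos.le)]
  have hone := tendsto_nhds_unique (hlim.const_mul π) (tendsto_const_nhds.congr' (.symm htest))
  exact eq_inv_of_mul_eq_one_right hone

theorem integral_deriv_smul (hG : IsRadialFundamentalSolution α G) (hα : α ≠ 0)
    (hGi : IntegrableOn G (Ioi 0)) (hGc : ContinuousOn G (Ioi 0)) {w : ℝ → ℝ}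
    (hw : ContDiff ℝ ∞ w) (hwc : HasCompactSupport w) (hw0 : tsupport w ⊆ Ioi 0) :
    ∫ s, deriv w s • G s = -∫ s, w s • (-(∫ x in Ioi s, G x) / (4 * α * s)) := by
  obtain ⟨h, hh, hh0, hdh, hlap⟩ :=
    exists_radialLap_eq_deriv hw hwc fun h => self_notMem_Ioi (hw0 h)
  have hGl : LocallyIntegrableOn G (Ici 0) :=
    IntegrableOn.locallyIntegrableOn (by rwa [integrableOn_Ici_iff_integrableOn_Ioi])
  have hhG : IntegrableOn (fun s => h s • G s) (Ioi 0) :=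
    integrableOn_Ioi_smul_of_eventually_eq_zero hGl hh.continuous.continuousOn hh0
  have hdwG : Integrable (fun s => deriv w s • G s) :=
    integrable_smul_of_tsupport_subset (hGc.locallyIntegrableOn measurableSet_Ioi)
      (hw.continuous_deriv (by simp)) hwc.deriv (tsupport_deriv_subset.trans hw0)
  have htest : h 0 =
      π * ((∫ s in Ioi 0, h s • G s) - 4 * α * ∫ s in Ioi 0, deriv w s • G s) := by
    rw [hG h hh hh0]
    congr 1
    rw [← integral_const_mul, ← integral_sub hhG (hdwG.integrableOn.const_mul _)]
    simp only [hlap, smul_eq_mul]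
    congr! 2 with s
    ring
  have hw_zero : ∀ s ∉ Ioi 0, w s = 0 := fun s hs =>
    image_eq_zero_of_notMem_tsupport fun h => hs (hw0 h)
  have hdw_zero : ∀ s ∉ Ioi 0, deriv w s = 0 := fun s hs =>
    deriv_of_notMem_tsupport fun h => hs (hw0 h)
  rw [integral_Ioi_smul_eq_add_integral_deriv_smul hGi hGc (hh.of_le (by simp)) hh0,
    hG.integral_Ioi_zero hGi,
    setIntegral_eq_integral_of_forall_compl_eq_zero fun s hs => by
      rw [hdh, hw_zero s hs, smul_zero, zero_smul],
    setIntegral_eq_integral_of_forall_compl_eq_zero fun s hs => by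
      rw [hdw_zero s hs, zero_smul]] at htest
  have hrhs : ∀ s, w s • (-(∫ x in Ioi s, G x) / (4 * α * s)) =
      -(4 * α)⁻¹ * (deriv h s • ∫ x in Ioi s, G x) := by
    intro s
    rw [hdh]
    simp only [smul_eq_mul, div_eq_mul_inv, mul_inv]
    ring
  simp only [hrhs, integral_const_mul]
  have hπ := Real.pi_ne_zero
  rw [smul_eq_mul, add_sub_assoc, mul_add, mul_left_comm, mul_inv_cancel₀ hπ, mul_one,
    left_eq_add, mul_eq_zero_iff_left hπ, sub_eq_zero] at htest
  rw [htest, neg_mul, neg_neg, inv_mul_cancel_left₀ (mul_ne_zero four_ne_zero hα)]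

theorem hasDerivAt (hG : IsRadialFundamentalSolution α G) (hα : α ≠ 0)
    (hGi : IntegrableOn G (Ioi 0)) (hGc : ContinuousOn G (Ioi 0)) {t : ℝ} (ht : 0 < t) :
    HasDerivAt G (-(∫ x in Ioi t, G x) / (4 * α * t)) t := by
  have hR : ContinuousOn (fun s => -(∫ x in Ioi s, G x) / (4 * α * s)) (Ioi 0) :=
    ((hGi.continuousOn_Ici_primitive_Ioi.mono Ioi_subset_Ici_self).neg).div (by fun_prop)
      fun s hs => mul_ne_zero (mul_ne_zero four_ne_zero hα) (mem_Ioi.1 hs).ne'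
  exact hasDerivAt_of_integral_deriv_smul_eq_neg isOpen_Ioi ordConnected_Ioi hGc hR
    (fun w hw hwc hw0 => hG.integral_deriv_smul hα hGi hGc hw hwc hw0) ht

end IsRadialFundamentalSolution

theorem hasDerivAt_mul_deriv_mul_add_mul_eq_zero {G K R : ℝ → ℝ} {α t : ℝ} (hα : α ≠ 0)
    (ht : t ≠ 0) (hG : HasDerivAt G (-R t / (4 * α * t)) t) (hR : HasDerivAt R (-G t) t)
    (hK : ContDiffAt ℝ 2 K t) (hode : K t = α * radialLap K t) :
    HasDerivAt (fun t => 4 * α * (deriv K t * (t * G t)) + K t * R t) 0 t := by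
  have hdK : DifferentiableAt ℝ (deriv K) t :=
    ((hK.fderiv_right one_add_one_eq_two.le).differentiableAt one_ne_zero).clm_apply
      (differentiableAt_const 1)
  refine (((hdK.hasDerivAt.fun_mul ((hasDerivAt_id' t).fun_mul hG)).const_mul (4 * α)).fun_add
    ((hK.differentiableAt two_ne_zero).hasDerivAt.fun_mul hR)).congr_deriv ?_
  rw [radialLap] at hode
  have hflux : 4 * α * (t * (-R t / (4 * α * t))) = -R t := by field_simp
  linear_combination (-G t) * hode + deriv K t * hflux

theorem mul_integral_Ioi_eq_neg_derivWithin_mul {G K : ℝ → ℝ} {α a : ℝ} (hα : α ≠ 0) (ha : 0 < a)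
    (hGi : IntegrableOn G (Ioi a))
    (hG : ∀ t, a ≤ t → HasDerivAt G (-(∫ x in Ioi t, G x) / (4 * α * t)) t)
    (hKC : ContDiffOn ℝ 2 K (Ici a)) (hode : ∀ t, a < t → K t = α * radialLap K t)
    (hK : Tendsto K atTop (𝓝 0)) (hK' : Tendsto (deriv K) atTop (𝓝 0)) :
    K a * ∫ x in Ioi a, G x = -(4 * α * a * derivWithin K (Ici a) a * G a) := by
  let K' : ℝ → ℝ := derivWithin K (Ici a)
  let R : ℝ → ℝ := fun t => ∫ x in Ioi t, G x
  let W : ℝ → ℝ := fun t => 4 * α * (K' t * (t * G t)) + K t * R t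
  have hGc : ContinuousOn G (Ici a) := fun t ht => (hG t ht).continuousAt.continuousWithinAt
  have hK'c : ContinuousOn K' (Ici a) :=
    hKC.continuousOn_derivWithin (uniqueDiffOn_Ici a) one_le_two
  have hK'_eq : ∀ t, a < t → K' =ᶠ[𝓝 t] deriv K := fun t ht => by
    filter_upwards [Ioi_mem_nhds ht] with x hx using derivWithin_of_mem_nhds (Ici_mem_nhds hx)
  have hWc : ContinuousOn W (Ici a) :=
    (continuousOn_const.mul (hK'c.mul (continuousOn_id.mul hGc))).add
      (hKC.continuousOn.mul hGi.continuousOn_Ici_primitive_Ioi)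
  have hWd : ∀ t, a < t → HasDerivAt W 0 t := by
    intro t ht
    refine (hasDerivAt_mul_deriv_mul_add_mul_eq_zero hα (ha.trans ht).ne' (hG t ht.le)
      (hasDerivAt_integral_Ioi hGi ht (hG t ht.le).continuousAt)
      (hKC.contDiffAt (Ici_mem_nhds ht)) (hode t ht)).congr_of_eventuallyEq ?_
    filter_upwards [hK'_eq t ht] with x hx
    simp only [W, R, hx]
  -- Integrability bounds `t G(t)` only along some sequence, which suffices as `W` is constant.
  let l : Filter ℝ := atTop ⊓ 𝓟 {t | ‖t • G t‖ < 1}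
  have : NeBot l :=
    frequently_iff_neBot.1 (frequently_norm_smul_lt_of_integrableOn_Ioi hGi one_pos)
  have hWlim : Tendsto W l (𝓝 0) := by
    have hK'lim : Tendsto K' atTop (𝓝 0) :=
      hK'.congr' ((eventually_gt_atTop a).mono fun t ht => (hK'_eq t ht).self_of_nhds.symm)
    have hbdd : IsBoundedUnder (· ≤ ·) l fun t => ‖t * G t‖ :=
      isBoundedUnder_of_eventually_le (a := 1) <|
        (eventually_principal.2 fun _ ht => ht.le).filter_mono inf_le_right
    have hR : Tendsto R l (𝓝 0) := (tendsto_integral_Ioi_zero tendsto_id).mono_left inf_le_left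
    have hflux := (hK'lim.mono_left inf_le_left).zero_mul_isBoundedUnder_le hbdd
    have hsum := (hflux.const_mul (4 * α)).add ((hK.mono_left inf_le_left).mul hR)
    rwa [mul_zero, zero_mul, add_zero] at hsum
  have hWa : W a = 0 := eq_of_hasDerivAt_zero_of_tendsto hWc hWd inf_le_left hWlim
  linear_combination hWa

end RadialFundamentalSolution

section RadialFunctions

theorem norm2_sq (x : ℝ × ℝ) : norm2 x ^ 2 = x.1 ^ 2 + x.2 ^ 2 :=
  Real.sq_sqrt (by positivity)

theorem norm2_sqrt_zero (s : ℝ) : norm2 (√s, 0) = √s := by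
  rw [norm2, zero_pow two_ne_zero, add_zero, Real.sqrt_sq (Real.sqrt_nonneg s)]

theorem norm2_polar {r : ℝ} (hr : 0 ≤ r) (θ : ℝ) : norm2 (r * Real.cos θ, r * Real.sin θ) = r := by
  rw [norm2, mul_pow, mul_pow, ← mul_add, Real.cos_sq_add_sin_sq, mul_one, Real.sqrt_sq hr]

theorem norm2_neg (x : ℝ × ℝ) : norm2 (-x) = norm2 x := by
  simp only [norm2, Prod.fst_neg, Prod.snd_neg, neg_sq]

theorem norm_le_norm2 (x : ℝ × ℝ) : ‖x‖ ≤ norm2 x :=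
  max_le (Real.abs_le_sqrt (le_add_of_nonneg_right (sq_nonneg x.2)))
    (Real.abs_le_sqrt (le_add_of_nonneg_left (sq_nonneg x.1)))

theorem continuous_norm2 : Continuous norm2 := by
  unfold norm2
  fun_prop

theorem contDiff_norm2_sq {n : WithTop ℕ∞} : ContDiff ℝ n fun x => norm2 x ^ 2 := by
  simp only [norm2_sq]
  fun_prop

theorem hasFDerivAt_norm2_sq (x : ℝ × ℝ) :
    HasFDerivAt (fun y => norm2 y ^ 2)
      ((2 * x.1) • ContinuousLinearMap.fst ℝ ℝ ℝ + (2 * x.2) • ContinuousLinearMap.snd ℝ ℝ ℝ)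
      x := by
  simp only [norm2_sq]
  refine ((hasFDerivAt_fst.pow 2).add (hasFDerivAt_snd.pow 2)).congr_fderiv ?_
  ext <;> simp

theorem tendsto_norm2_cocompact_atTop : Tendsto norm2 (cocompact (ℝ × ℝ)) atTop :=
  tendsto_atTop_mono norm_le_norm2 tendsto_norm_cocompact_atTop

theorem tendsto_sqrt_zero_cocompact :
    Tendsto (fun s => ((√s, 0) : ℝ × ℝ)) atTop (cocompact (ℝ × ℝ)) := by
  rw [← Metric.cobounded_eq_cocompact, ← tendsto_norm_atTop_iff_cobounded]
  exact tendsto_atTop_mono (fun s => (le_abs_self _).trans (norm_fst_le ((√s, 0) : ℝ × ℝ)))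
    Real.tendsto_sqrt_atTop

theorem lap_eq_radialLap {F : ℝ × ℝ → ℝ} {k : ℝ → ℝ} {U : Set ℝ} (hU : IsOpen U)
    (hk : ContDiffOn ℝ 2 k U) (hF : ∀ y, norm2 y ^ 2 ∈ U → F y = k (norm2 y ^ 2)) {x : ℝ × ℝ}
    (hx : norm2 x ^ 2 ∈ U) : lap F x = radialLap k (norm2 x ^ 2) := by
  have hV : IsOpen {y | norm2 y ^ 2 ∈ U} := hU.preimage (continuous_norm2.pow 2)
  have hdk : DifferentiableOn ℝ (deriv k) U :=
    ((contDiffOn_succ_iff_deriv_of_isOpen hU).1 hk).2.2.differentiableOn one_ne_zero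
  have hfd : ∀ y, norm2 y ^ 2 ∈ U → HasFDerivAt F (deriv k (norm2 y ^ 2) •
      ((2 * y.1) • ContinuousLinearMap.fst ℝ ℝ ℝ + (2 * y.2) • ContinuousLinearMap.snd ℝ ℝ ℝ))
      y := by
    intro y hy
    have hky := ((hk.differentiableOn two_ne_zero).differentiableAt (hU.mem_nhds hy)).hasDerivAt
    refine (hky.comp_hasFDerivAt y (hasFDerivAt_norm2_sq y)).congr_of_eventuallyEq ?_
    filter_upwards [hV.mem_nhds hy] with z hz using hF z hz
  have hpd₁ : pd1 F =ᶠ[𝓝 x] fun y => deriv k (norm2 y ^ 2) * (2 * y.1) := by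
    filter_upwards [hV.mem_nhds hx] with y hy
    simp [pd1, (hfd y hy).fderiv]
  have hpd₂ : pd2 F =ᶠ[𝓝 x] fun y => deriv k (norm2 y ^ 2) * (2 * y.2) := by
    filter_upwards [hV.mem_nhds hx] with y hy
    simp [pd2, (hfd y hy).fderiv]
  have hk' := (hdk.differentiableAt (hU.mem_nhds hx)).hasDerivAt.comp_hasFDerivAt x
    (hasFDerivAt_norm2_sq x)
  have hpd₁' := ((hk'.mul (hasFDerivAt_fst.const_mul 2)).congr_of_eventuallyEq hpd₁).fderiv
  have hpd₂' := ((hk'.mul (hasFDerivAt_snd.const_mul 2)).congr_of_eventuallyEq hpd₂).fderiv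
  rw [lap, pd1, pd2, hpd₁', hpd₂', radialLap]
  simp [norm2_sq]
  ring

variable {E : Type*} [NormedAddCommGroup E] [NormedSpace ℝ E]

theorem norm2_measurableEquivRealProd (z : ℂ) : norm2 (Complex.measurableEquivRealProd z) = ‖z‖ :=
  (Complex.norm_eq_sqrt_sq_add_sq z).symm

theorem integral_comp_norm2_sq (v : ℝ → E) :
    ∫ y, v (norm2 y ^ 2) = π • ∫ s in Ioi 0, v s := by
  rw [← Complex.volume_preserving_equiv_real_prod.integral_comp']
  simp only [norm2_measurableEquivRealProd]
  have hball : volume.real (Metric.ball (0 : ℂ) 1) = π := by simp [measureReal_def]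
  have hpow : ∀ r : ℝ, (2 * r ^ ((2 : ℝ) - 1)) • v (r ^ (2 : ℝ)) = (2 : ℝ) • r • v (r ^ 2) := by
    intro r
    norm_num [mul_smul]
  rw [integral_fun_norm_addHaar volume fun r => v (r ^ 2), hball, Complex.finrank_real_complex,
    ← integral_comp_rpow_Ioi_of_pos (g := v) two_pos, ← Nat.cast_smul_eq_nsmul ℝ, smul_comm]
  simp only [hpow, integral_smul, Nat.add_one_sub_one, pow_one, Nat.cast_ofNat]

theorem integrable_comp_norm2_sq_iff {v : ℝ → E} :
    (Integrable fun y => v (norm2 y ^ 2)) ↔ IntegrableOn v (Ioi 0) := by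
  rw [← Complex.volume_preserving_equiv_real_prod.integrable_comp_emb
    Complex.measurableEquivRealProd.measurableEmbedding]
  simp only [Function.comp_def, norm2_measurableEquivRealProd]
  rw [integrable_fun_norm_addHaar volume (f := fun r => v (r ^ 2)),
    ← integrableOn_Ioi_comp_rpow_iff' v two_ne_zero]
  norm_num [Complex.finrank_real_complex]

theorem setIntegral_comp_norm2_sq (v : ℝ → E) {r : ℝ} (hr : 0 ≤ r) :
    ∫ y in {x | r < norm2 x}, v (norm2 y ^ 2) = π • ∫ s in Ioi (r ^ 2), v s := by
  have hmeas : MeasurableSet {x | r < norm2 x} :=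
    (isOpen_lt continuous_const continuous_norm2).measurableSet
  have hind : {x | r < norm2 x}.indicator (fun y => v (norm2 y ^ 2)) =
      fun y => (Ioi (r ^ 2)).indicator v (norm2 y ^ 2) := by
    funext y
    have hiff : r < norm2 y ↔ r ^ 2 < norm2 y ^ 2 :=
      (pow_lt_pow_iff_left₀ hr (Real.sqrt_nonneg _) two_ne_zero).symm
    simp only [indicator_apply, mem_ofPred_eq, mem_Ioi, hiff]
  rw [← integral_indicator hmeas, hind, integral_comp_norm2_sq,
    setIntegral_indicator measurableSet_Ioi, inter_eq_right.2 (Ioi_subset_Ioi (sq_nonneg r))]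

end RadialFunctions

section RadialProfile

/-- The profile `k` of a radial function `x ↦ k (|x|²)`, read off along the first coordinate
axis. -/
def radialProfile {E : Type*} (f : ℝ × ℝ → E) (s : ℝ) : E := f (√s, 0)

theorem radialProfile_norm2_sq {E : Type*} {f : ℝ × ℝ → E} {x : ℝ × ℝ}
    (hf : ∀ y, norm2 x = norm2 y → f x = f y) : radialProfile f (norm2 x ^ 2) = f x := by
  refine (hf _ ?_).symm
  rw [norm2_sqrt_zero]
  exact (Real.sqrt_sq (Real.sqrt_nonneg _)).symm

theorem radialProfile_comp_norm2_sq {E : Type*} {f : ℝ × ℝ → E}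
    (hf : ∀ x y, norm2 x = norm2 y → f x = f y) : (fun x => radialProfile f (norm2 x ^ 2)) = f :=
  funext fun x => radialProfile_norm2_sq (hf x)

theorem sqrt_zero_ne_zero {s : ℝ} (hs : 0 < s) : ((√s, 0) : ℝ × ℝ) ≠ 0 := fun h =>
  (Real.sqrt_pos.2 hs).ne' (congrArg Prod.fst h)

theorem continuousOn_radialProfile {E : Type*} [TopologicalSpace E] {f : ℝ × ℝ → E}
    (hf : ContinuousOn f {x | x ≠ 0}) : ContinuousOn (radialProfile f) (Ioi 0) :=
  hf.comp (by fun_prop) fun _ hs => sqrt_zero_ne_zero hs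

theorem tendsto_radialProfile {E : Type*} {f : ℝ × ℝ → E} {l : Filter E}
    (hf : Tendsto f (cocompact (ℝ × ℝ)) l) : Tendsto (radialProfile f) atTop l :=
  hf.comp tendsto_sqrt_zero_cocompact

theorem integrableOn_radialProfile {E : Type*} [NormedAddCommGroup E] [NormedSpace ℝ E]
    {f : ℝ × ℝ → E} (hf : ∀ x y, norm2 x = norm2 y → f x = f y) (hfi : Integrable f) :
    IntegrableOn (radialProfile f) (Ioi 0) := by
  rwa [← integrable_comp_norm2_sq_iff, radialProfile_comp_norm2_sq hf]

theorem setIntegral_norm2_of_radial {E : Type*} [NormedAddCommGroup E] [NormedSpace ℝ E]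
    {f : ℝ × ℝ → E} (hf : ∀ x y, norm2 x = norm2 y → f x = f y) {r : ℝ} (hr : 0 ≤ r) :
    ∫ y in {x | r < norm2 x}, f y = π • ∫ s in Ioi (r ^ 2), radialProfile f s := by
  rw [← setIntegral_comp_norm2_sq _ hr, radialProfile_comp_norm2_sq hf]

theorem contDiffAt_sqrt_zero {n : WithTop ℕ∞} {t : ℝ} (ht : t ≠ 0) :
    ContDiffAt ℝ n (fun s => ((√s, 0) : ℝ × ℝ)) t :=
  (Real.contDiffAt_sqrt ht).prodMk contDiffAt_const

theorem derivWithin_radialProfile {F : ℝ × ℝ → ℝ} {S : Set (ℝ × ℝ)} {T : Set ℝ} {t : ℝ}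
    (ht : t ≠ 0) (hT : UniqueDiffWithinAt ℝ T t)
    (hTS : MapsTo (fun s => ((√s, 0) : ℝ × ℝ)) T S)
    (hF : DifferentiableWithinAt ℝ F S (√t, 0)) :
    derivWithin (radialProfile F) T t = (2 * √t)⁻¹ * fderivWithin ℝ F S (√t, 0) (1, 0) := by
  have hcurve : HasDerivWithinAt (fun s => ((√s, 0) : ℝ × ℝ)) ((2 * √t)⁻¹ • (1, 0)) T t := by
    simpa using ((Real.hasDerivAt_sqrt ht).prodMk (hasDerivAt_const t (0 : ℝ))).hasDerivWithinAt
  have := (hF.hasFDerivWithinAt.comp_hasDerivWithinAt t hcurve hTS).derivWithin hT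
  rwa [map_smul, smul_eq_mul] at this

theorem tendsto_deriv_radialProfile {F : ℝ × ℝ → ℝ}
    (hF : ∀ᶠ x in cocompact (ℝ × ℝ), DifferentiableAt ℝ F x)
    (hF' : Tendsto (fderiv ℝ F) (cocompact (ℝ × ℝ)) (𝓝 0)) :
    Tendsto (deriv (radialProfile F)) atTop (𝓝 0) := by
  have hlim : Tendsto (fun t => (2 * √t)⁻¹ * fderiv ℝ F (√t, 0) (1, 0)) atTop (𝓝 0) := by
    have hinv := (Real.tendsto_sqrt_atTop.const_mul_atTop two_pos).inv_tendsto_atTop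
    have heval : Tendsto (fun t => fderiv ℝ F (√t, 0) (1, 0)) atTop (𝓝 0) :=
      ((ContinuousLinearMap.apply ℝ ℝ ((1, 0) : ℝ × ℝ)).continuous.tendsto' 0 0 (map_zero _)).comp
        (hF'.comp tendsto_sqrt_zero_cocompact)
    have hmul := hinv.mul heval
    rwa [mul_zero] at hmul
  refine hlim.congr' ?_
  filter_upwards [tendsto_sqrt_zero_cocompact.eventually hF, eventually_gt_atTop 0] with t hFt ht
  rw [← derivWithin_univ, derivWithin_radialProfile ht.ne' uniqueDiffWithinAt_univ
    (mapsTo_univ _ _) hFt.differentiableWithinAt, fderivWithin_univ]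

theorem isRadialFundamentalSolution_radialProfile {G : ℝ × ℝ → ℝ} {α : ℝ}
    (hG : ∀ x y, norm2 x = norm2 y → G x = G y)
    (hfund : ∀ φ : ℝ × ℝ → ℝ, ContDiff ℝ ∞ φ → HasCompactSupport φ →
      φ 0 = ∫ y, G (-y) * (φ y - α * lap φ y)) :
    IsRadialFundamentalSolution α (radialProfile G) := by
  intro h hh hh0
  have hφ : ContDiff ℝ ∞ fun y => h (norm2 y ^ 2) := hh.comp contDiff_norm2_sq
  have hφc : HasCompactSupport fun y => h (norm2 y ^ 2) := by
    rw [hasCompactSupport_iff_eventuallyEq, coclosedCompact_eq_cocompact]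
    exact ((tendsto_pow_atTop two_ne_zero).comp tendsto_norm2_cocompact_atTop).eventually hh0
  have hradial : ∀ y, G (-y) * (h (norm2 y ^ 2) - α * lap (fun y => h (norm2 y ^ 2)) y) =
      (h (norm2 y ^ 2) - α * radialLap h (norm2 y ^ 2)) * radialProfile G (norm2 y ^ 2) := by
    intro y
    rw [lap_eq_radialLap isOpen_univ (contDiff_infty.1 hh 2).contDiffOn (fun _ _ => rfl) trivial,
      radialProfile_norm2_sq (hG y), hG (-y) y (norm2_neg y), mul_comm]
  have h0 : h (norm2 0 ^ 2) = h 0 := by simp [norm2]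
  rw [← h0, hfund _ hφ hφc, ← smul_eq_mul π, ← integral_comp_norm2_sq]
  simp only [hradial]

theorem integral_circle_of_radial {G : ℝ × ℝ → ℝ} (hG : ∀ x y, norm2 x = norm2 y → G x = G y)
    {r : ℝ} (hr : 0 ≤ r) :
    ∫ θ in (0 : ℝ)..2 * π, G (r * Real.cos θ, r * Real.sin θ) * r =
      2 * π * r * radialProfile G (r ^ 2) := by
  have hconst : ∀ θ, G (r * Real.cos θ, r * Real.sin θ) = radialProfile G (r ^ 2) := by
    intro θ
    rw [← radialProfile_norm2_sq (hG _), norm2_polar hr]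
  simp only [hconst, intervalIntegral.integral_const, sub_zero, smul_eq_mul]
  ring

end RadialProfile

section Exterior

variable {F : ℝ × ℝ → ℝ} {ε : ℝ}

theorem mapsTo_sqrt_zero (ε : ℝ) :
    MapsTo (fun s => ((√s, 0) : ℝ × ℝ)) (Ici (ε ^ 2)) {x | ε ≤ norm2 x} := by
  intro s hs
  rw [mem_ofPred_eq, norm2_sqrt_zero]
  exact Real.le_sqrt_of_sq_le hs

theorem contDiffOn_radialProfile {n : WithTop ℕ∞} (hε : 0 < ε)
    (hF : ContDiffOn ℝ n F {x | ε ≤ norm2 x}) :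
    ContDiffOn ℝ n (radialProfile F) (Ici (ε ^ 2)) :=
  hF.comp (fun _ hs => (contDiffAt_sqrt_zero ((pow_pos hε 2).trans_le hs).ne').contDiffWithinAt)
    (mapsTo_sqrt_zero ε)

theorem radialProfile_eq_mul_radialLap {α : ℝ} (hε : 0 < ε)
    (hF : ContDiffOn ℝ 2 F {x | ε ≤ norm2 x})
    (hrad : ∀ x y, ε ≤ norm2 x → norm2 x = norm2 y → F x = F y)
    (hpde : ∀ x, ε < norm2 x → F x - α * lap F x = 0) {t : ℝ} (ht : ε ^ 2 < t) :
    radialProfile F t = α * radialLap (radialProfile F) t := by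
  have hsq : norm2 (√t, 0) ^ 2 = t := by
    rw [norm2_sqrt_zero, Real.sq_sqrt ((sq_nonneg ε).trans ht.le)]
  have hlap : lap F (√t, 0) = radialLap (radialProfile F) (norm2 (√t, 0) ^ 2) := by
    refine lap_eq_radialLap isOpen_Ioi ((contDiffOn_radialProfile hε hF).mono Ioi_subset_Ici_self)
      (fun y hy => (radialProfile_norm2_sq fun z => hrad y z ?_).symm) (by rwa [hsq])
    exact (lt_of_pow_lt_pow_left₀ 2 (Real.sqrt_nonneg _) hy).le
  have ht' : ε < norm2 (√t, 0) := by
    rwa [norm2_sqrt_zero, Real.lt_sqrt hε.le]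
  rw [← hsq, ← hlap, hsq]
  exact sub_eq_zero.1 (hpde _ ht')

theorem two_mul_derivWithin_radialProfile {A : ℝ} (hε : 0 < ε)
    (hF : DifferentiableOn ℝ F {x | ε ≤ norm2 x})
    (hNeu : ∀ x, norm2 x = ε → fderivWithin ℝ F {y | ε ≤ norm2 y} x (ε⁻¹ • x) = A) :
    2 * ε * derivWithin (radialProfile F) (Ici (ε ^ 2)) (ε ^ 2) = A := by
  have hmaps := mapsTo_sqrt_zero ε
  have hsqrt : √(ε ^ 2) = ε := Real.sqrt_sq hε.le
  have hnormal : ((1, 0) : ℝ × ℝ) = ε⁻¹ • (ε, 0) := by simp [hε.ne']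
  rw [derivWithin_radialProfile (pow_pos hε 2).ne' (uniqueDiffOn_Ici _ _ self_mem_Ici) hmaps
    (hF _ (hmaps self_mem_Ici)), hsqrt, hnormal, hNeu (ε, 0) (by rw [← hsqrt, norm2_sqrt_zero]),
    mul_inv_cancel_left₀ (mul_pos two_pos hε).ne']

theorem eventually_differentiableAt_cocompact (hF : DifferentiableOn ℝ F {x | ε ≤ norm2 x}) :
    ∀ᶠ x in cocompact (ℝ × ℝ), DifferentiableAt ℝ F x := by
  filter_upwards [tendsto_norm2_cocompact_atTop.eventually_gt_atTop ε] with x hx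
  exact hF.differentiableAt <|
    ((continuous_norm2.tendsto x).eventually_const_lt hx).mono fun _ => le_of_lt

end Exterior

/-- If `F₀` is radially symmetric, `C²` on the closed exterior of the disk of radius `ε`,
decays at infinity together with its derivative, satisfies `(1 − αΔ)F₀ = 0` outside, with
interior normal derivative `A` and boundary value `B` on `{|x| = ε}`, and `G_α` is the kernel
of `(1 − αΔ)^{-1}` on `ℝ²`, then
`B = −αA (∫_{|x|=ε} G_α ds) / (∫_{|x|>ε} G_α dx)`. -/
theorem stmt17 (α ε A B : ℝ) (hα : 0 < α) (hε : 0 < ε)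
    (F₀ GA : ℝ × ℝ → ℝ)
    (hF₀C : ContDiffOn ℝ 2 F₀ {x : ℝ × ℝ | ε ≤ norm2 x})
    (hrad : ∀ x y : ℝ × ℝ, ε ≤ norm2 x → norm2 x = norm2 y → F₀ x = F₀ y)
    (hpde : ∀ x : ℝ × ℝ, ε < norm2 x → F₀ x - α * lap F₀ x = 0)
    (hNeu : ∀ x : ℝ × ℝ, norm2 x = ε →
      fderivWithin ℝ F₀ {y : ℝ × ℝ | ε ≤ norm2 y} x (ε⁻¹ • x) = A)
    (hDir : ∀ x : ℝ × ℝ, norm2 x = ε → F₀ x = B)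
    (hdecay : Tendsto (fun x : ℝ × ℝ => |F₀ x| + ‖fderiv ℝ F₀ x‖)
      (cocompact (ℝ × ℝ)) (nhds 0))
    (hGint : Integrable GA)
    (hGpos : ∀ x : ℝ × ℝ, x ≠ 0 → 0 < GA x)
    (hGcont : ContinuousOn GA {x : ℝ × ℝ | x ≠ 0})
    (hGrad : ∀ x y : ℝ × ℝ, norm2 x = norm2 y → GA x = GA y)
    (hfund : ∀ φ : ℝ × ℝ → ℝ, ContDiff ℝ (⊤ : ℕ∞) φ → HasCompactSupport φ →
      ∀ x : ℝ × ℝ, φ x = ∫ y : ℝ × ℝ, GA (x - y) * (φ y - α * lap φ y)) :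
    B = -α * A * (∫ θ in (0:ℝ)..(2 * π), GA (ε * Real.cos θ, ε * Real.sin θ) * ε) /
        (∫ y in {x : ℝ × ℝ | ε < norm2 x}, GA y) := by
  have ha : 0 < ε ^ 2 := pow_pos hε 2
  have hFd : DifferentiableOn ℝ F₀ {x | ε ≤ norm2 x} := hF₀C.differentiableOn two_ne_zero
  have hF : Tendsto F₀ (cocompact _) (𝓝 0) :=
    squeeze_zero_norm (fun x => le_add_of_nonneg_right (norm_nonneg (fderiv ℝ F₀ x))) hdecay
  have hF' : Tendsto (fderiv ℝ F₀) (cocompact _) (𝓝 0) :=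
    squeeze_zero_norm (fun x => le_add_of_nonneg_left (abs_nonneg (F₀ x))) hdecay
  have hGi := integrableOn_radialProfile hGrad hGint
  have hGi' := hGi.mono_set (Ioi_subset_Ioi ha.le)
  have hG : IsRadialFundamentalSolution α (radialProfile GA) :=
    isRadialFundamentalSolution_radialProfile hGrad fun φ hφ hφc => by
      simpa only [zero_sub] using hfund φ hφ hφc 0
  have hflux := mul_integral_Ioi_eq_neg_derivWithin_mul hα.ne' ha hGi'
    (fun t ht => hG.hasDerivAt hα.ne' hGi (continuousOn_radialProfile hGcont) (ha.trans_le ht))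
    (contDiffOn_radialProfile hε hF₀C)
    (fun t ht => radialProfile_eq_mul_radialLap hε hF₀C hrad hpde ht) (tendsto_radialProfile hF)
    (tendsto_deriv_radialProfile (eventually_differentiableAt_cocompact hFd) hF')
  have hB : radialProfile F₀ (ε ^ 2) = B := hDir _ (by rw [norm2_sqrt_zero, Real.sqrt_sq hε.le])
  have hA := two_mul_derivWithin_radialProfile hε hFd hNeu
  have hpos := integral_Ioi_pos hGi' fun t ht => hGpos _ (sqrt_zero_ne_zero (ha.trans ht))
  rw [integral_circle_of_radial hGrad hε.le, setIntegral_norm2_of_radial hGrad hε.le, smul_eq_mul,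
    eq_div_iff (mul_pos pi_pos hpos).ne', ← hB]
  linear_combination π * hflux - 2 * π * α * ε * radialProfile GA (ε ^ 2) * hA
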